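/- Let X be a compact metric space with Lebesgue covering dimension dim(X) = d and let T : X → X be an injective continuous map with dim(P_n) < n/2 for every n ≤ 2d. Then the set of h ∈ C(X,[0,1]) for which the (2d+1)-delay observation map h_0^{2d} is an embedding of X into [0,1]^{2d+1} contains a dense G_δ subset of C(X,[0,1]) with the supremum metric. -/

import Mathlib

open Function Set Topology unitInterval

/-- A topological space `X` has Lebesgue covering dimension at most `m`:
every finite open cover admits a finite open refinement in which no point
belongs to more than `m + 1` sets. -/
def CovDimLE (X : Type*) [TopologicalSpace X] (m : ℕ) : Prop :=
  ∀ (n : ℕ) (U : Fin n → Set X), (∀ i, IsOpen (U i)) → (⋃ i, U i) = univ →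
    ∃ (k : ℕ) (V : Fin k → Set X), (∀ j, IsOpen (V j)) ∧ (⋃ j, V j) = univ ∧
      (∀ j, ∃ i, V j ⊆ U i) ∧ ∀ x : X, Nat.card {j : Fin k // x ∈ V j} ≤ m + 1

/-- The Lebesgue covering dimension of a topological space, as an element of `ℕ∞`
(`⊤` if no finite bound exists). -/
noncomputable def covDim (X : Type*) [TopologicalSpace X] : ℕ∞ :=
  sInf {e : ℕ∞ | ∃ m : ℕ, e = m ∧ CovDimLE X m}

/-- The set of periodic points of `T` of period at most `n`. -/
def periodicLE {X : Type*} (T : X → X) (n : ℕ) : Set X :=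
  {x | ∃ p, 1 ≤ p ∧ p ≤ n ∧ T^[p] x = x}

/-- The `(2d+1)`-delay observation map associated to an observable `h : C(X, [0,1])`
and the dynamics `T : X → X`: `x ↦ (h x, h (T x), …, h (T^{2d} x))`. -/
def delayMap {X : Type*} [TopologicalSpace X] (T : X → X) (d : ℕ)
    (h : C(X, I)) : X → (Fin (2 * d + 1) → I) :=
  fun x i => h (T^[(i : ℕ)] x)

theorem CovDimLE.of_isClosedEmbedding {Y Z : Type*} [TopologicalSpace Y] [TopologicalSpace Z]
    {m : ℕ} (hZ : CovDimLE Z m) {f : Y → Z} (hf : IsClosedEmbedding f) : CovDimLE Y m := by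
  intro n U hU hcov
  rcases isEmpty_or_nonempty (Fin n) with hn | ⟨⟨i₀⟩⟩
  · refine ⟨0, fun _ => ∅, by simp, ?_, by simp, by simp⟩
    rw [← hcov]; simp
  choose W hWo hW using fun i => hf.isInducing.isOpen_iff.1 (hU i)
  obtain ⟨k, V, hVo, hVc, hVW, hVcard⟩ := hZ n (fun i => W i ∪ (range f)ᶜ)
    (fun i => (hWo i).union hf.isClosed_range.isOpen_compl) (by
      refine eq_univ_of_forall fun z => ?_
      rw [mem_iUnion]
      by_cases hz : z ∈ range f
      · obtain ⟨y, rfl⟩ := hz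
        obtain ⟨i, hi⟩ := mem_iUnion.1 (hcov ▸ mem_univ y : y ∈ ⋃ i, U i)
        exact ⟨i, Or.inl (by rw [← hW i] at hi; exact hi)⟩
      · exact ⟨i₀, Or.inr hz⟩)
  refine ⟨k, fun j => f ⁻¹' V j, fun j => (hVo j).preimage hf.continuous, ?_, fun j => ?_,
    fun y => hVcard (f y)⟩
  · rw [← preimage_iUnion, hVc, preimage_univ]
  · obtain ⟨i, hi⟩ := hVW j
    refine ⟨i, fun y hy => ?_⟩
    rw [← hW i]
    exact (hi hy).resolve_right fun h => h ⟨y, rfl⟩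

theorem exists_covDimLE_of_covDim_ne_top {Y : Type*} [TopologicalSpace Y] (h : covDim Y ≠ ⊤) :
    ∃ m : ℕ, covDim Y = m ∧ CovDimLE Y m := by
  refine csInf_mem (s := {e : ℕ∞ | ∃ m : ℕ, e = m ∧ CovDimLE Y m}) ?_
  by_contra hne
  rw [not_nonempty_iff_eq_empty] at hne
  exact h (by rw [covDim, hne, sInf_empty])

/-- In a compact space of dimension at most `D`, a continuous map is approximately constant on
the supports of a finite partition of unity of order at most `D`. -/
theorem CovDimLE.exists_partition {K E : Type*} [TopologicalSpace K] [CompactSpace K] [T2Space K]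
    [PseudoMetricSpace E] {D : ℕ} (hK : CovDimLE K D) {f : K → E} (hf : Continuous f)
    {ε : ℝ} (hε : 0 < ε) :
    ∃ (k : ℕ) (ψ : Fin k → C(K, ℝ)) (y : Fin k → K), (∀ v z, 0 ≤ ψ v z) ∧
      (∀ z, ∑ v, ψ v z = 1) ∧ (∀ z, Nat.card {v // ψ v z ≠ 0} ≤ D + 1) ∧
      ∀ v z, ψ v z ≠ 0 → dist (f z) (f (y v)) < ε := by
  have hopen : ∀ p : K, IsOpen {z | dist (f z) (f p) < ε} := fun p =>
    isOpen_lt (by fun_prop) continuous_const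
  obtain ⟨t, ht⟩ := isCompact_univ.elim_finite_subcover _ hopen
    fun p _ => mem_iUnion.2 ⟨p, by simpa using hε⟩
  let p : Fin t.card → K := fun i => (t.equivFin.symm i : K)
  obtain ⟨k, V, hVo, hVc, hVU, hcard⟩ := hK t.card (fun i => {z | dist (f z) (f (p i)) < ε})
    (fun i => hopen _) (by
      refine eq_univ_of_forall fun z => ?_
      obtain ⟨q, hq, hz⟩ := mem_iUnion₂.1 (ht (mem_univ z))
      refine mem_iUnion.2 ⟨t.equivFin ⟨q, hq⟩, ?_⟩
      simpa [p] using hz)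
  choose c hc using hVU
  obtain ⟨ψ, hψ⟩ := PartitionOfUnity.exists_isSubordinate isClosed_univ V hVo hVc.ge
  have hmem : ∀ v z, ψ v z ≠ 0 → z ∈ V v := fun v z h => hψ v (subset_tsupport _ h)
  refine ⟨k, fun v => ψ v, fun v => p (c v), fun v z => ψ.nonneg v z, fun z => ?_, fun z => ?_,
    fun v z h => hc v (hmem v z h)⟩
  · rw [← finsum_eq_sum_of_fintype]
    exact ψ.sum_eq_one (mem_univ z)
  · exact (Nat.card_le_card_of_injective
      (fun v : {v // ψ v z ≠ 0} => (⟨v, hmem v z v.2⟩ : {v // z ∈ V v}))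
      fun v w h => Subtype.ext (congrArg (fun u => u.1) h)).trans (hcard z)

/-- Functions satisfying `s ∘ e = s` for a fixed-point-free map `e` factor through a set
of at most half the size. -/
theorem exists_factor_of_fixedPointFree {N : Type} [Fintype N] (e : N → N) (he : ∀ ν, e ν ≠ ν) :
    ∃ (C : Type) (_ : Fintype C) (q : N → C), 2 * Fintype.card C ≤ Fintype.card N ∧
      ∀ s : N → ℝ, (∀ ν, s ν = s (e ν)) → ∃ r : C → ℝ, ∀ ν, s ν = r (q ν) := by
  classical
  let R : N → N → Prop := fun ν μ => e ν = μ
  let _ : Fintype (Quot R) := Fintype.ofSurjective (Quot.mk R) Quot.mk_surjective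
  refine ⟨Quot R, inferInstance, Quot.mk R, ?_, fun s hs => ⟨Quot.lift s ?_, fun ν => rfl⟩⟩
  · refine Finset.mul_card_image_le_card_of_maps_to (f := Quot.mk R) (s := Finset.univ)
      (t := Finset.univ) (fun _ _ => Finset.mem_univ _) 2 fun b _ => ?_
    obtain ⟨ν, rfl⟩ := Quot.mk_surjective b
    refine Finset.one_lt_card.2 ⟨e ν, ?_, ν, ?_, he ν⟩
    · simpa using (Quot.sound (r := R) (a := ν) rfl).symm
    · simp
  · rintro ν _ rfl
    exact hs ν

/-- Parametrization of the coefficients `c` for which some weights `a`, supported on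
`insert (v₀ j) (S j)` and with total mass one, satisfy `∑ v, c ⟨ν, v⟩ * a v = s ν`, where
`s = r ∘ q`. The weights are normalized to be `1` at `v₀ j`. -/
def incidenceMap {J N C : Type} {V : J → Type} [∀ j, Fintype (V j)] [∀ j, DecidableEq (V j)]
    (src : N → J) (q : N → C) (v₀ : ∀ j, V j) (S : ∀ j, Finset (V j))
    (p : ((Σ j, S j) → ℝ) × (C → ℝ) × ({w : Σ ν, V (src ν) // w.2 ≠ v₀ (src w.1)} → ℝ)) :
    (Σ ν, V (src ν)) → ℝ := fun w =>
  if h : w.2 = v₀ (src w.1) then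
    p.2.1 (q w.1) * (1 + ∑ v, if hv : v ∈ S (src w.1) then p.1 ⟨src w.1, v, hv⟩ else 0) -
      ∑ v, if hv : v ∈ S (src w.1) then
        (if hw : v ≠ v₀ (src w.1) then p.1 ⟨src w.1, v, hv⟩ * p.2.2 ⟨⟨w.1, v⟩, hw⟩ else 0) else 0
  else p.2.2 ⟨w, h⟩

theorem contDiff_incidenceMap {J N C : Type} [Fintype J] [Fintype N] [Fintype C] {V : J → Type}
    [∀ j, Fintype (V j)] [∀ j, DecidableEq (V j)]
    (src : N → J) (q : N → C) (v₀ : ∀ j, V j) (S : ∀ j, Finset (V j)) :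
    ContDiff ℝ 1 (incidenceMap src q v₀ S) := by
  rw [contDiff_pi]
  intro w
  unfold incidenceMap
  split_ifs with h
  · refine ContDiff.sub (ContDiff.mul (by fun_prop) (contDiff_const.add
      (ContDiff.sum fun v _ => ?_))) (ContDiff.sum fun v _ => ?_)
    · split_ifs <;> fun_prop
    · split_ifs <;> fun_prop
  · fun_prop

theorem finrank_incidenceMap_source_lt {J N C : Type} [Fintype J] [Fintype N] [Fintype C]
    {V : J → Type} [∀ j, Fintype (V j)] [∀ j, DecidableEq (V j)] (src : N → J) (D : J → ℕ)
    (v₀ : ∀ j, V j) (S : ∀ j, Finset (V j)) (hS : ∀ j, (S j).card ≤ D j)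
    (hC : 2 * Fintype.card C ≤ Fintype.card N) (hD : 2 * ∑ j, D j < Fintype.card N) :
    Module.finrank ℝ (((Σ j, S j) → ℝ) × (C → ℝ) ×
        ({w : Σ ν, V (src ν) // w.2 ≠ v₀ (src w.1)} → ℝ)) <
      Module.finrank ℝ ((Σ ν, V (src ν)) → ℝ) := by
  have h1 : Fintype.card {w : Σ ν, V (src ν) // w.2 = v₀ (src w.1)} = Fintype.card N := by
    refine Fintype.card_congr
      ⟨fun w => w.1.1, fun ν => ⟨⟨ν, v₀ (src ν)⟩, rfl⟩, ?_, fun ν => rfl⟩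
    rintro ⟨⟨ν, v⟩, h⟩
    obtain rfl : v = v₀ (src ν) := h
    rfl
  have h2 := Fintype.card_subtype_compl fun w : Σ ν, V (src ν) => w.2 = v₀ (src w.1)
  have h3 := Fintype.card_subtype_le fun w : Σ ν, V (src ν) => w.2 = v₀ (src w.1)
  have h4 : Fintype.card (Σ j, S j) ≤ ∑ j, D j := by
    rw [Fintype.card_sigma]
    exact Finset.sum_le_sum fun j _ => by simpa using hS j
  rw [Module.finrank_prod, Module.finrank_prod]
  simp only [Module.finrank_fintype_fun_eq_card, ne_eq]
  omega

/-- Generic coefficients separate the two sides of the equations indexed by a fixed-point-free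
map `e`, for all weights supported on few vertices. -/
theorem dense_setOf_generic_coefficients {J N : Type} [Fintype J] [Fintype N] {V : J → Type}
    [∀ j, Fintype (V j)] (src : N → J) (D : J → ℕ) (e : N → N) (he : ∀ ν, e ν ≠ ν)
    (hD : 2 * ∑ j, D j < Fintype.card N) :
    Dense {c : (Σ ν, V (src ν)) → ℝ | ∀ a : ∀ j, V j → ℝ, (∀ j, ∑ v, a j v = 1) →
      (∀ j, Nat.card {v // a j v ≠ 0} ≤ D j + 1) →
      ∃ ν, ∑ v, c ⟨ν, v⟩ * a (src ν) v ≠ ∑ v, c ⟨e ν, v⟩ * a (src (e ν)) v} := by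
  classical
  obtain ⟨C, _, q, hC, hq⟩ := exists_factor_of_fixedPointFree e he
  by_cases hV : ∀ j, Nonempty (V j)
  swap
  · obtain ⟨j, hj⟩ := not_forall.1 hV
    rw [not_nonempty_iff] at hj
    exact dense_univ.mono fun c _ a ha => by simpa using ha j
  let Idx := {t : (∀ j, V j) × (∀ j, Finset (V j)) // ∀ j, (t.2 j).card ≤ D j}
  let B : Set ((Σ ν, V (src ν)) → ℝ) :=
    ⋃ t : Idx, range (incidenceMap src q t.1.1 t.1.2)
  have hB : dimH B < Module.finrank ℝ ((Σ ν, V (src ν)) → ℝ) := by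
    have hpos : 0 < Module.finrank ℝ ((Σ ν, V (src ν)) → ℝ) := by
      obtain ⟨ν⟩ := Fintype.card_pos_iff.1 (show 0 < Fintype.card N by omega)
      obtain ⟨v⟩ := hV (src ν)
      rw [Module.finrank_fintype_fun_eq_card]
      exact Fintype.card_pos_iff.2 ⟨⟨ν, v⟩⟩
    have hle : dimH B ≤ (Module.finrank ℝ ((Σ ν, V (src ν)) → ℝ) - 1 : ℕ) := by
      rw [dimH_iUnion]
      refine iSup_le fun t => (contDiff_incidenceMap src q t.1.1 t.1.2).dimH_range_le.trans ?_
      have := finrank_incidenceMap_source_lt src D t.1.1 t.1.2 t.2 hC hD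
      exact Nat.cast_le.2 (by omega)
    exact hle.trans_lt (Nat.cast_lt.2 (by omega))
  refine (dense_compl_of_dimH_lt_finrank hB).mono fun c hc a ha hcard => ?_
  by_contra! hcon
  apply hc
  have hne : ∀ j, ∃ v, a j v ≠ 0 := fun j => by
    by_contra! h
    simpa [h] using ha j
  choose v₀ hv₀ using hne
  let S : ∀ j, Finset (V j) := fun j => {v | a j v ≠ 0 ∧ v ≠ v₀ j}
  have hS : ∀ j, (S j).card ≤ D j := fun j => by
    have h1 : insert (v₀ j) (S j) = ({v | a j v ≠ 0} : Finset (V j)) := by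
      ext v
      by_cases h : v = v₀ j <;> simp [S, h, hv₀]
    have h2 : (insert (v₀ j) (S j)).card = (S j).card + 1 :=
      Finset.card_insert_of_notMem (by simp [S])
    have h3 := hcard j
    rw [Nat.card_eq_fintype_card, Fintype.card_subtype, ← h1, h2] at h3
    omega
  obtain ⟨r, hr⟩ := hq (fun ν => ∑ v, c ⟨ν, v⟩ * a (src ν) v) hcon
  refine mem_iUnion.2 ⟨⟨(v₀, S), hS⟩,
    (fun w => a w.1 w.2 / a w.1 (v₀ w.1), r, fun w => c w.1), ?_⟩
  funext ⟨ν, v⟩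
  by_cases h : v = v₀ (src ν)
  · subst h
    have hz := hv₀ (src ν)
    have e1 := ha (src ν)
    have e2 := hr ν
    rw [← Finset.add_sum_erase _ _ (Finset.mem_univ (v₀ (src ν)))] at e1 e2
    have f1 : (∑ v, if v ∈ S (src ν) then a (src ν) v / a (src ν) (v₀ (src ν)) else 0) =
        (∑ v ∈ Finset.univ.erase (v₀ (src ν)), a (src ν) v) / a (src ν) (v₀ (src ν)) := by
      rw [Finset.sum_div, ← Finset.add_sum_erase _ _ (Finset.mem_univ (v₀ (src ν)))]
      rw [if_neg (by simp [S]), zero_add]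
      refine Finset.sum_congr rfl fun v hv => ?_
      by_cases h0 : a (src ν) v = 0
      · simp [h0]
      · rw [if_pos (by simp [S, h0, Finset.ne_of_mem_erase hv])]
    have f2 : (∑ v, if v ∈ S (src ν) then (if v ≠ v₀ (src ν) then
          a (src ν) v / a (src ν) (v₀ (src ν)) * c ⟨ν, v⟩ else 0) else 0) =
        (∑ v ∈ Finset.univ.erase (v₀ (src ν)), c ⟨ν, v⟩ * a (src ν) v) /
          a (src ν) (v₀ (src ν)) := by
      rw [Finset.sum_div, ← Finset.add_sum_erase _ _ (Finset.mem_univ (v₀ (src ν)))]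
      rw [if_neg (by simp [S]), zero_add]
      refine Finset.sum_congr rfl fun v hv => ?_
      have hv' := Finset.ne_of_mem_erase hv
      by_cases h0 : a (src ν) v = 0
      · simp [h0]
      · rw [if_pos (by simp [S, h0, hv']), if_pos hv']
        ring
    simp only [incidenceMap, if_true, dite_eq_ite]
    rw [f1, f2]
    field_simp
    linear_combination r (q ν) * e1 - e2
  · simp [incidenceMap, h]

/-- A point of the cube can be approximated, within its interior, by points of a dense set. -/
theorem Dense.exists_near_mem_Icc {ι : Type*} [Fintype ι] {s : Set (ι → ℝ)} (hs : Dense s)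
    {c₀ : ι → ℝ} (hc₀ : ∀ i, c₀ i ∈ Icc (0 : ℝ) 1) {ε : ℝ} (hε : 0 < ε) :
    ∃ c ∈ s, ∀ i, c i ∈ Icc (0 : ℝ) 1 ∧ |c i - c₀ i| < ε := by
  have hopen : IsOpen (univ.pi fun i => Ioo (0 : ℝ) 1 ∩ Metric.ball (c₀ i) ε) :=
    isOpen_set_pi finite_univ fun i _ => isOpen_Ioo.inter Metric.isOpen_ball
  obtain ⟨c, hc, hcs⟩ := hs.inter_open_nonempty _ hopen (by
    refine univ_pi_nonempty_iff.2 fun i => ?_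
    have : c₀ i ∈ closure (Ioo (0 : ℝ) 1) := by rw [closure_Ioo zero_ne_one]; exact hc₀ i
    obtain ⟨y, hy, hyd⟩ := Metric.mem_closure_iff.1 this ε hε
    exact ⟨y, hy, by rwa [Metric.mem_ball, dist_comm]⟩)
  refine ⟨c, hcs, fun i => ⟨Ioo_subset_Icc_self (hc i (mem_univ i)).1, ?_⟩⟩
  simpa [Real.dist_eq] using (hc i (mem_univ i)).2

/-- Tietze extension of a small perturbation of an `I`-valued function. -/
theorem exists_extension_near {X Y : Type*} [TopologicalSpace X] [NormalSpace X]
    [CompactSpace X] [TopologicalSpace Y] [CompactSpace Y] {g : Y → X} (hg : IsClosedEmbedding g)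
    (h₀ : C(X, I)) (F : C(Y, I)) {ε : ℝ} (hε : 0 ≤ ε)
    (hF : ∀ y, |(F y : ℝ) - h₀ (g y)| ≤ ε) :
    ∃ h : C(X, I), dist h h₀ ≤ ε ∧ ∀ y, h (g y) = F y := by
  let f : C(Y, ℝ) := ⟨fun y => (F y : ℝ) - h₀ (g y), by
    have := hg.continuous
    fun_prop⟩
  obtain ⟨G, hG, hGf⟩ :=
    BoundedContinuousFunction.exists_extension_forall_mem_Icc_of_isClosedEmbedding
      (.mkOfCompact f) (a := -ε) (b := ε)
    (fun y => abs_le.1 (hF y)) (by linarith) hg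
  refine ⟨⟨fun x => projIcc 0 1 zero_le_one ((h₀ x : ℝ) + G x), by fun_prop⟩, ?_, fun y => ?_⟩
  · refine (ContinuousMap.dist_le hε).2 fun x => ?_
    have h1 : |(projIcc (0 : ℝ) 1 zero_le_one (h₀ x + G x) : ℝ) -
        projIcc (0 : ℝ) 1 zero_le_one (h₀ x : ℝ)| ≤ |(h₀ x : ℝ) + G x - h₀ x| :=
      abs_projIcc_sub_projIcc zero_le_one
    rw [projIcc_val, add_sub_cancel_left] at h1
    exact h1.trans (abs_le.2 (hG x))
  · have : G (g y) = F y - h₀ (g y) := congrFun hGf y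
    simp [this]

/-- Density of the observables which, on every tuple `z` of points of the sets `K j`, violate one
of the equations `h (g ν z) = h (g (e ν) z)`. -/
theorem dense_setOf_exists_ne {X : Type*} [MetricSpace X] [CompactSpace X] {J N : Type}
    [Fintype J] [Fintype N] (K : J → Set X) (hK : ∀ j, IsClosed (K j)) (D : J → ℕ)
    (hKD : ∀ j, CovDimLE (K j) (D j)) (src : N → J) (g : N → X → X) (hg : ∀ ν, Continuous (g ν))
    (hinj : Injective fun w : Σ ν, K (src ν) => g w.1 w.2) (e : N → N) (he : ∀ ν, e ν ≠ ν)
    (hD : 2 * ∑ j, D j < Fintype.card N) :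
    Dense {h : C(X, I) | ∀ z : ∀ j, K j,
      ∃ ν, h (g ν (z (src ν))) ≠ h (g (e ν) (z (src (e ν))))} := by
  have : ∀ j, CompactSpace (K j) := fun j => isCompact_iff_compactSpace.1 (hK j).isCompact
  have hemb : IsClosedEmbedding fun w : Σ ν, K (src ν) => g w.1 w.2 := by
    refine Continuous.isClosedEmbedding ?_ hinj
    exact continuous_sigma fun ν => (hg ν).comp continuous_subtype_val
  refine Metric.dense_iff.2 fun h₀ r hr => ?_
  choose k ψ y hnonneg hsum hcard hnear using fun j => (hKD j).exists_partition
    (f := fun (z : K j) (ν : N) => (h₀ (g ν z) : ℝ))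
    (continuous_pi fun ν => by have := hg ν; fun_prop) (show 0 < r / 4 by linarith)
  obtain ⟨c, hc, hcI⟩ := (dense_setOf_generic_coefficients (V := fun j => Fin (k j)) src D e he
    hD).exists_near_mem_Icc (c₀ := fun w => (h₀ (g w.1 (y (src w.1) w.2)) : ℝ))
    (fun w => (h₀ _).2) (show 0 < r / 4 by linarith)
  let F₀ : (Σ ν, K (src ν)) → ℝ := fun w => ∑ v, c ⟨w.1, v⟩ * ψ (src w.1) v w.2
  have hF₀ : Continuous F₀ := continuous_sigma fun ν => by
    change Continuous fun z : K (src ν) => ∑ v, c ⟨ν, v⟩ * ψ (src ν) v z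
    exact continuous_finsetSum _ fun v _ => by fun_prop
  have hF₀I : ∀ w, F₀ w ∈ Icc (0 : ℝ) 1 := fun w => by
    refine ⟨Finset.sum_nonneg fun v _ => mul_nonneg (hcI _).1.1 (hnonneg _ _ _), ?_⟩
    rw [← hsum (src w.1) w.2]
    exact Finset.sum_le_sum fun v _ => mul_le_of_le_one_left (hnonneg _ _ _) (hcI _).1.2
  obtain ⟨h, hdist, hh⟩ := exists_extension_near hemb h₀ ⟨fun w => ⟨F₀ w, hF₀I w⟩, by fun_prop⟩
    (show 0 ≤ r / 2 by linarith) (by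
      intro w
      have h1 : F₀ w - h₀ (g w.1 w.2) =
          ∑ v, (c ⟨w.1, v⟩ - h₀ (g w.1 w.2)) * ψ (src w.1) v w.2 := by
        simp only [sub_mul, Finset.sum_sub_distrib, ← Finset.mul_sum, hsum, mul_one, F₀]
      change |F₀ w - h₀ (g w.1 w.2)| ≤ _
      rw [h1, ← mul_one (r / 2), ← hsum (src w.1) w.2, Finset.mul_sum]
      refine (Finset.abs_sum_le_sum_abs _ _).trans (Finset.sum_le_sum fun v _ => ?_)
      rw [abs_mul, abs_of_nonneg (hnonneg _ _ _)]
      by_cases h0 : ψ (src w.1) v w.2 = 0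
      · simp [h0]
      refine mul_le_mul_of_nonneg_right ?_ (hnonneg _ _ _)
      have h2 := (hcI ⟨w.1, v⟩).2
      have h3 := (dist_le_pi_dist _ _ w.1).trans_lt (hnear _ v w.2 h0)
      rw [Real.dist_eq, abs_sub_comm] at h3
      have h4 := abs_sub_le (c ⟨w.1, v⟩) (h₀ (g w.1 (y (src w.1) v))) (h₀ (g w.1 w.2))
      dsimp only at h2 h3 h4
      linarith)
  refine ⟨h, by rw [Metric.mem_ball]; linarith, fun z => ?_⟩
  obtain ⟨ν, hν⟩ := hc (fun j v => ψ j v (z j)) (fun j => hsum j _) (fun j => hcard j _)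
  refine ⟨ν, fun heq => hν ?_⟩
  have h1 := hh ⟨ν, z (src ν)⟩
  have h2 := hh ⟨e ν, z (src (e ν))⟩
  dsimp only at h1 h2
  rw [h1, h2] at heq
  exact congrArg Subtype.val heq

/-- The points of minimal period `m` if `m < L`, and the points without period less than `L` if
`m = L`. -/
def periodType {X : Type*} (T : X → X) (L m : ℕ) : Set X :=
  {x | (∀ i, 1 ≤ i → i < m → T^[i] x ≠ x) ∧ (m < L → T^[m] x = x)}

theorem exists_mem_periodType {X : Type*} (T : X → X) {L : ℕ} (hL : 1 ≤ L) (x : X) :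
    ∃ m, 1 ≤ m ∧ m ≤ L ∧ x ∈ periodType T L m := by
  classical
  have hex : ∃ m, 1 ≤ m ∧ (m = L ∨ T^[m] x = x) := ⟨L, hL, Or.inl rfl⟩
  refine ⟨Nat.find hex, (Nat.find_spec hex).1, Nat.find_min' hex ⟨hL, Or.inl rfl⟩,
    fun i hi him h => Nat.find_min hex him ⟨hi, Or.inr h⟩, fun h => ?_⟩
  exact (Nat.find_spec hex).2.resolve_left h.ne

theorem iterate_ne_of_mem_periodType {X : Type*} {T : X → X} (hT : Injective T) {L m : ℕ} {x : X}
    (hx : x ∈ periodType T L m) {i j : ℕ} (hi : i < m) (hj : j < m) (hij : i ≠ j) :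
    T^[i] x ≠ T^[j] x := by
  wlog h : i < j generalizing i j
  · exact (this hj hi hij.symm (by omega)).symm
  intro heq
  obtain ⟨k, rfl⟩ := Nat.exists_eq_add_of_lt h
  rw [add_assoc, iterate_add_apply] at heq
  exact hx.1 (k + 1) (by omega) (by omega) (hT.iterate i heq).symm

theorem iterate_mod_eq {X : Type*} {T : X → X} {L m : ℕ} (hmL : m ≤ L) {z : X}
    (hz : m < L → T^[m] z = z) {i : ℕ} (hi : i < L) : T^[i % m] z = T^[i] z := by
  rcases hmL.lt_or_eq with h | rfl
  · exact IsPeriodicPt.iterate_mod_apply (hz h) i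
  · rw [Nat.mod_eq_of_lt hi]

/-- A closed neighborhood of `x` within the closure of its period type. -/
def periodBall {X : Type*} [MetricSpace X] (T : X → X) (L m : ℕ) (x : X) (r : ℝ) : Set X :=
  Metric.closedBall x r ∩ {z | m < L → T^[m] z = z}

theorem isClosed_periodBall {X : Type*} [MetricSpace X] {T : X → X} (hT : Continuous T)
    (L m : ℕ) (x : X) (r : ℝ) : IsClosed (periodBall T L m x r) := by
  refine Metric.isClosed_closedBall.inter ?_
  by_cases h : m < L
  · simpa [h] using isClosed_eq (hT.iterate m) continuous_id
  · simp [h]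

theorem periodBall_mem_nhdsWithin {X : Type*} [MetricSpace X] (T : X → X) (L m : ℕ) (x : X)
    {r : ℝ} (hr : 0 < r) : periodBall T L m x r ∈ 𝓝[periodType T L m] x :=
  Filter.inter_mem (mem_nhdsWithin_of_mem_nhds (Metric.closedBall_mem_nhds x hr))
    (Filter.mem_of_superset self_mem_nhdsWithin fun _ hz => hz.2)

theorem exists_covDimLE_periodBall {X : Type*} [MetricSpace X] [CompactSpace X]
    {T : X → X} (hTc : Continuous T) {d : ℕ} (hdim : covDim X = d)
    (hper : ∀ n : ℕ, 1 ≤ n → n ≤ 2 * d → 2 * covDim (periodicLE T n) < (n : ℕ∞))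
    {L m : ℕ} (hL : 2 * d < L) (hm : 1 ≤ m) :
    ∃ D : ℕ, 2 * D < m ∧ ∀ x r, CovDimLE (periodBall T L m x r) D := by
  have hcpt : ∀ x r, CompactSpace (periodBall T L m x r) := fun x r =>
    isCompact_iff_compactSpace.1 (isClosed_periodBall hTc L m x r).isCompact
  rcases le_or_gt m (2 * d) with hmd | hmd
  · have hlt := hper m hm hmd
    obtain ⟨D, hD, hD'⟩ := exists_covDimLE_of_covDim_ne_top (Y := periodicLE T m) (by
      intro h
      rw [h] at hlt
      simp at hlt)
    rw [hD] at hlt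
    refine ⟨D, by exact_mod_cast hlt, fun x r => ?_⟩
    have hsub : periodBall T L m x r ⊆ periodicLE T m := fun z hz =>
      ⟨m, hm, le_rfl, hz.2 (by omega)⟩
    exact hD'.of_isClosedEmbedding
      ((continuous_inclusion hsub).isClosedEmbedding (inclusion_injective hsub))
  · obtain ⟨D, hD, hD'⟩ := exists_covDimLE_of_covDim_ne_top (Y := X) (by simp [hdim])
    obtain rfl : d = D := by exact_mod_cast hdim.symm.trans hD
    exact ⟨d, hmd, fun x r => hD'.of_isClosedEmbedding
      (isClosed_periodBall hTc L m x r).isClosedEmbedding_subtypeVal⟩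

/-- If the images `g ν (x (src ν))` are distinct, then the images under the maps `g ν` of small
closed balls are pairwise disjoint. -/
theorem exists_radius_forall_ne {X : Type*} [MetricSpace X] {J N : Type} [Finite N]
    (src : N → J) (g : N → X → X) (hg : ∀ ν, Continuous (g ν)) (x : J → X)
    (hx : ∀ ν μ, ν ≠ μ → g ν (x (src ν)) ≠ g μ (x (src μ))) :
    ∃ r > 0, ∀ ν μ, ν ≠ μ → ∀ z ∈ Metric.closedBall (x (src ν)) r,
      ∀ w ∈ Metric.closedBall (x (src μ)) r, g ν z ≠ g μ w := by
  have hev : ∀ᶠ r in 𝓝[>] (0 : ℝ), ∀ ν μ, ν ≠ μ → ∀ z ∈ Metric.closedBall (x (src ν)) r,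
      ∀ w ∈ Metric.closedBall (x (src μ)) r, g ν z ≠ g μ w := by
    refine Filter.eventually_all.2 fun ν => Filter.eventually_all.2 fun μ => ?_
    by_cases h : ν = μ
    · simp [h]
    have hopen : IsOpen {p : X × X | g ν p.1 ≠ g μ p.2} :=
      isOpen_ne_fun ((hg ν).comp continuous_fst) ((hg μ).comp continuous_snd)
    obtain ⟨δ, hδ, hball⟩ := Metric.isOpen_iff.1 hopen (x (src ν), x (src μ)) (hx ν μ h)
    filter_upwards [Ioo_mem_nhdsGT hδ] with r hr _ z hz w hw
    refine hball (a := (z, w)) ?_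
    rw [Metric.mem_ball, Prod.dist_eq]
    exact max_lt (lt_of_le_of_lt hz hr.2) (lt_of_le_of_lt hw hr.2)
  obtain ⟨r, hr, hr0⟩ := (hev.and self_mem_nhdsWithin).exists
  exact ⟨r, hr0, hr⟩

theorem isOpen_setOf_delayMap_ne {X : Type*} [MetricSpace X] [CompactSpace X] {T : X → X}
    (hT : Continuous T) (d : ℕ) {K : Set (X × X)} (hK : IsClosed K) :
    IsOpen {h : C(X, I) | ∀ p ∈ K, delayMap T d h p.1 ≠ delayMap T d h p.2} := by
  have hc : Continuous fun q : C(X, I) × X => delayMap T d q.1 q.2 := by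
    refine continuous_pi fun i => ?_
    have := hT.iterate (i : ℕ)
    simp only [delayMap]
    fun_prop
  have hcl : IsClosed {q : C(X, I) × (X × X) |
      q.2 ∈ K ∧ delayMap T d q.1 q.2.1 = delayMap T d q.1 q.2.2} := by
    refine (hK.preimage continuous_snd).inter (isClosed_eq ?_ ?_)
    · exact hc.comp (continuous_fst.prodMk (continuous_fst.comp continuous_snd))
    · exact hc.comp (continuous_fst.prodMk (continuous_snd.comp continuous_snd))
  have himg := isClosedMap_fst_of_compactSpace _ hcl
  rw [← isOpen_compl_iff] at himg
  convert himg using 1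
  ext h
  simp only [mem_ofPred_eq, mem_compl_iff, mem_image, Prod.exists, exists_and_right, exists_eq_right,
    not_exists, not_and, Prod.forall, ne_eq]

/-- A set of pairs which is locally covered by closed sets of pairs separated by a dense set of
observables is separated by a residual set of observables. -/
theorem exists_dense_Gδ_of_local {X : Type*} [MetricSpace X] [CompactSpace X] {T : X → X}
    (hT : Continuous T) (d : ℕ) (S : Set (X × X))
    (hS : ∀ p ∈ S, ∃ K ∈ 𝓝[S] p, IsClosed K ∧
      Dense {h : C(X, I) | ∀ q ∈ K, delayMap T d h q.1 ≠ delayMap T d h q.2}) :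
    ∃ G : Set C(X, I), IsGδ G ∧ Dense G ∧
      ∀ h ∈ G, ∀ p ∈ S, delayMap T d h p.1 ≠ delayMap T d h p.2 := by
  choose! K hKn hKc hKd using hS
  obtain ⟨t, htS, htc, hcov⟩ := TopologicalSpace.countable_cover_nhdsWithin hKn
  have hopen := fun p (hp : p ∈ t) => isOpen_setOf_delayMap_ne hT d (hKc p (htS hp))
  refine ⟨_, IsGδ.biInter htc fun p hp => (hopen p hp).isGδ,
    dense_biInter_of_isOpen hopen htc fun p hp => hKd p (htS hp), fun h hh p hp => ?_⟩
  obtain ⟨q, hq, hpq⟩ := mem_iUnion₂.1 (hcov hp)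
  exact mem_iInter₂.1 hh q hq p hpq

/-- Density of observables separating orbit segments of points near `x j`, `j : J`. -/
theorem exists_radius_dense_setOf_exists_ne {X : Type*} [MetricSpace X] [CompactSpace X]
    {T : X → X} (hTc : Continuous T) (hTi : Injective T) {d : ℕ} (hdim : covDim X = d)
    (hper : ∀ n : ℕ, 1 ≤ n → n ≤ 2 * d → 2 * covDim (periodicLE T n) < (n : ℕ∞))
    {J : Type} [Fintype J] [Nonempty J] {L : ℕ} (hL : 2 * d < L) (x : J → X) (m : J → ℕ)
    (hm : ∀ j, 1 ≤ m j)
    (hx : ∀ ν μ : Σ j, Fin (m j), ν ≠ μ → T^[ν.2] (x ν.1) ≠ T^[μ.2] (x μ.1))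
    (e : (Σ j, Fin (m j)) → Σ j, Fin (m j)) (he : ∀ ν, e ν ≠ ν) :
    ∃ r > 0, Dense {h : C(X, I) | ∀ z : ∀ j, periodBall T L (m j) (x j) r,
      ∃ ν, h (T^[ν.2] (z ν.1)) ≠ h (T^[(e ν).2] (z (e ν).1))} := by
  obtain ⟨r, hr, hne⟩ := exists_radius_forall_ne (N := Σ j, Fin (m j)) (fun ν => ν.1)
    (fun ν => T^[ν.2]) (fun ν => hTc.iterate _) x hx
  choose D hDm hD using fun j => exists_covDimLE_periodBall hTc hdim hper hL (hm j)
  refine ⟨r, hr, dense_setOf_exists_ne (fun j => periodBall T L (m j) (x j) r)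
    (fun j => isClosed_periodBall hTc _ _ _ _) D (fun j => hD j _ _) (fun ν => ν.1)
    (fun ν => T^[ν.2]) (fun ν => hTc.iterate _) ?_ e he ?_⟩
  · rintro ⟨ν, z⟩ ⟨μ, w⟩ h
    by_cases hνμ : ν = μ
    · subst hνμ
      exact congrArg (Sigma.mk ν) (Subtype.ext (hTi.iterate _ h))
    · exact absurd h (hne ν μ hνμ z z.2.1 w w.2.1)
  · rw [Finset.mul_sum, Fintype.card_sigma]
    simp only [Fintype.card_fin]
    exact Finset.sum_lt_sum_of_nonempty Finset.univ_nonempty fun j _ => hDm j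

/-- Local separation of pairs whose orbit segments are disjoint. -/
theorem exists_nhdsWithin_dense_of_disjoint {X : Type*} [MetricSpace X] [CompactSpace X]
    {T : X → X} (hTc : Continuous T) (hTi : Injective T) {d : ℕ} (hdim : covDim X = d)
    (hper : ∀ n : ℕ, 1 ≤ n → n ≤ 2 * d → 2 * covDim (periodicLE T n) < (n : ℕ∞))
    (m : Bool → ℕ) (hm : ∀ b, 1 ≤ m b) (hmd : ∀ b, m b ≤ 2 * d + 1) {x : Bool → X}
    (hx : ∀ b, x b ∈ periodType T (2 * d + 1) (m b))
    (hne : ∀ b, ∀ k ≤ 2 * d, T^[k] (x b) ≠ x !b) :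
    ∃ K ∈ 𝓝[periodType T (2 * d + 1) (m true) ×ˢ periodType T (2 * d + 1) (m false)]
        (x true, x false), IsClosed K ∧
      Dense {h : C(X, I) | ∀ q ∈ K, delayMap T d h q.1 ≠ delayMap T d h q.2} := by
  have hsep : ∀ b b', b ≠ b' → ∀ i ≤ 2 * d, ∀ j ≤ 2 * d, T^[i] (x b) ≠ T^[j] (x b') := by
    intro b b' hb i hi j hj h
    wlog hij : i ≤ j generalizing b b' i j
    · exact this b' b hb.symm j hj i hi h.symm (by omega)
    obtain ⟨k, rfl⟩ := Nat.exists_eq_add_of_le hij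
    rw [iterate_add_apply] at h
    refine hne b' k (by omega) ?_
    rw [← hTi.iterate i h]
    exact congrArg x (Bool.eq_not.2 hb)
  obtain ⟨r, hr, hdense⟩ := exists_radius_dense_setOf_exists_ne hTc hTi hdim hper
    (L := 2 * d + 1) (by omega) x m hm (by
      rintro ⟨b, i⟩ ⟨b', j⟩ h
      by_cases hb : b = b'
      · subst hb
        refine iterate_ne_of_mem_periodType hTi (hx b) i.2 j.2 fun hij => h ?_
        exact congrArg (Sigma.mk b) (Fin.ext hij)
      · have := hmd b
        have := hmd b'
        exact hsep b b' hb i (by omega) j (by omega))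
    (fun ν => ⟨!ν.1, ⟨ν.2 % m (!ν.1), Nat.mod_lt _ (hm _)⟩⟩) (by
      rintro ⟨b, i⟩ h
      simpa using congrArg Sigma.fst h)
  refine ⟨periodBall T (2 * d + 1) (m true) (x true) r ×ˢ
    periodBall T (2 * d + 1) (m false) (x false) r, ?_,
    (isClosed_periodBall hTc _ _ _ _).prod (isClosed_periodBall hTc _ _ _ _), ?_⟩
  · rw [nhdsWithin_prod_eq]
    exact Filter.prod_mem_prod (periodBall_mem_nhdsWithin T _ _ _ hr)
      (periodBall_mem_nhdsWithin T _ _ _ hr)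
  refine hdense.mono fun h hh q hq heq => ?_
  obtain ⟨⟨b, i⟩, hν⟩ := hh fun b => match b with
    | true => ⟨q.1, hq.1⟩
    | false => ⟨q.2, hq.2⟩
  have hi : (i : ℕ) < 2 * d + 1 := i.2.trans_le (hmd b)
  have hval : h (T^[i] q.1) = h (T^[i] q.2) := congrFun heq ⟨i, hi⟩
  cases b
  · exact hν (hval.symm.trans (congrArg h (iterate_mod_eq (hmd true) hq.1.2 hi).symm))
  · exact hν (hval.trans (congrArg h (iterate_mod_eq (hmd false) hq.2.2 hi).symm))

/-- Local separation of pairs of points on the same orbit. -/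
theorem exists_nhdsWithin_dense_of_iterate {X : Type*} [MetricSpace X] [CompactSpace X]
    {T : X → X} (hTc : Continuous T) (hTi : Injective T) {d : ℕ} (hdim : covDim X = d)
    (hper : ∀ n : ℕ, 1 ≤ n → n ≤ 2 * d → 2 * covDim (periodicLE T n) < (n : ℕ∞))
    {k m : ℕ} (hk : k ≤ 2 * d) (hm : 1 ≤ m) (hmL : m ≤ 2 * d + k + 1) {x : X}
    (hx : x ∈ periodType T (2 * d + k + 1) m) (hne : T^[k] x ≠ x) :
    ∃ K ∈ 𝓝[{p : X × X | p.1 ∈ periodType T (2 * d + k + 1) m ∧ p.2 = T^[k] p.1}] (x, T^[k] x),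
      IsClosed K ∧
      Dense {h : C(X, I) | ∀ q ∈ K, delayMap T d h q.1 ≠ delayMap T d h q.2} := by
  have hk0 : k ≠ 0 := by
    rintro rfl
    exact hne rfl
  have hkm : ¬ m ∣ k := fun h => by
    refine hne ?_
    rw [← iterate_mod_eq hmL hx.2 (show k < 2 * d + k + 1 by omega),
      Nat.mod_eq_zero_of_dvd h, iterate_zero_apply]
  let e : ℕ → ℕ := fun i => if i ≤ 2 * d then (i + k) % m else i - k
  have hem : ∀ i < m, e i < m := fun i hi => by
    by_cases h : i ≤ 2 * d
    · simpa [e, h] using Nat.mod_lt _ hm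
    · simp only [e, h, if_false]
      omega
  have hei : ∀ i < m, e i ≠ i := fun i hi => by
    by_cases h : i ≤ 2 * d
    · simp only [e, h, if_true]
      intro h'
      refine hkm ((Nat.modEq_zero_iff_dvd).1 (Nat.ModEq.add_left_cancel' i ?_))
      rw [Nat.ModEq, h', add_zero, Nat.mod_eq_of_lt hi]
    · simp only [e, h, if_false]
      omega
  obtain ⟨r, hr, hdense⟩ := exists_radius_dense_setOf_exists_ne hTc hTi hdim hper
    (J := Unit) (L := 2 * d + k + 1) (by omega) (fun _ => x) (fun _ => m) (fun _ => hm) (by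
      rintro ⟨_, i⟩ ⟨_, j⟩ h
      refine iterate_ne_of_mem_periodType hTi hx i.2 j.2 fun hij => h ?_
      exact congrArg (Sigma.mk ()) (Fin.ext hij))
    (fun ν => ⟨(), ⟨e ν.2, hem _ ν.2.2⟩⟩) (by
      rintro ⟨_, i⟩ h
      refine hei i i.2 ?_
      simpa [Fin.ext_iff] using h)
  refine ⟨{p | p.1 ∈ periodBall T (2 * d + k + 1) m x r ∧ p.2 = T^[k] p.1}, ?_, ?_, ?_⟩
  · refine Filter.inter_mem ?_ (Filter.mem_of_superset self_mem_nhdsWithin fun p hp => hp.2)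
    exact (continuous_fst.continuousWithinAt.tendsto_nhdsWithin fun p hp => hp.1)
      (periodBall_mem_nhdsWithin T _ _ x hr)
  · exact ((isClosed_periodBall hTc _ _ _ _).preimage continuous_fst).inter
      (isClosed_eq continuous_snd ((hTc.iterate k).comp continuous_fst))
  refine hdense.mono fun h hh q hq heq => ?_
  obtain ⟨⟨_, i⟩, hν⟩ := hh fun _ => ⟨q.1, hq.1⟩
  have hval : ∀ j < 2 * d + 1, h (T^[j] q.1) = h (T^[j + k] q.1) := fun j hj => by
    have := congrFun heq ⟨j, hj⟩
    rwa [hq.2, delayMap, delayMap, ← iterate_add_apply] at this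
  refine hν ?_
  by_cases hi : (i : ℕ) ≤ 2 * d
  · simp only [e, hi, if_true]
    rw [iterate_mod_eq hmL hq.1.2 (by omega), hval i (by omega)]
  · simp only [e, hi, if_false]
    have := i.2
    rw [hval (i - k) (by omega), Nat.sub_add_cancel (by omega)]

theorem stmt10 {X : Type*} [MetricSpace X] [CompactSpace X]
    (T : X → X) (hTc : Continuous T) (hTi : Function.Injective T)
    (d : ℕ) (hdim : covDim X = d)
    (hper : ∀ n : ℕ, 1 ≤ n → n ≤ 2 * d →
      2 * covDim (periodicLE T n) < (n : ℕ∞)) :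
    ∃ G : Set C(X, I), IsGδ G ∧ Dense G ∧
      G ⊆ {h : C(X, I) | IsEmbedding (delayMap T d h)} := by
  let L := 2 * d + 1
  let SD : ℕ × ℕ → Set (X × X) := fun m =>
    {p | (p.1 ∈ periodType T L m.1 ∧ p.2 ∈ periodType T L m.2) ∧ 1 ≤ m.1 ∧ 1 ≤ m.2 ∧ m.1 ≤ L ∧
      m.2 ≤ L ∧ ∀ k ≤ 2 * d, T^[k] p.1 ≠ p.2 ∧ T^[k] p.2 ≠ p.1}
  let SI : ℕ × ℕ → Set (X × X) := fun t =>
    {p | (p.1 ∈ periodType T (2 * d + t.1 + 1) t.2 ∧ p.2 = T^[t.1] p.1) ∧ t.1 ≤ 2 * d ∧ 1 ≤ t.2 ∧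
      t.2 ≤ 2 * d + t.1 + 1 ∧ p.2 ≠ p.1}
  have hD := fun m => exists_dense_Gδ_of_local hTc d (SD m) (by
    rintro p ⟨hp, h1, h2, h3, h4, hne⟩
    obtain ⟨K, hK, hK'⟩ := exists_nhdsWithin_dense_of_disjoint hTc hTi hdim hper
      (fun b => cond b m.1 m.2) (by simp [h1, h2]) (by simp [h3, h4, L])
      (x := fun b => cond b p.1 p.2) (by simpa using hp.symm)
      (by simpa using ⟨fun k hk => (hne k hk).2, fun k hk => (hne k hk).1⟩)
    exact ⟨K, nhdsWithin_mono _ (fun q hq => hq.1) hK, hK'⟩)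
  have hI := fun t => exists_dense_Gδ_of_local hTc d (SI t) (by
    rintro ⟨x, y⟩ ⟨⟨hx, hy⟩, h1, h2, h3, hne⟩
    dsimp only at hx hy hne
    subst hy
    obtain ⟨K, hK, hK'⟩ := exists_nhdsWithin_dense_of_iterate hTc hTi hdim hper h1 h2 h3 hx hne
    exact ⟨K, nhdsWithin_mono _ (fun q hq => hq.1) hK, hK'⟩)
  choose GD hGD hGDd hGDs using hD
  choose GI hGI hGId hGIs using hI
  refine ⟨(⋂ m, GD m) ∩ ⋂ t, GI t, (IsGδ.iInter hGD).inter (IsGδ.iInter hGI),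
    (dense_iInter_of_Gδ hGD hGDd).inter_of_Gδ (IsGδ.iInter hGD) (IsGδ.iInter hGI)
      (dense_iInter_of_Gδ hGI hGId), fun h hh => ?_⟩
  have hiter : ∀ x k, k ≤ 2 * d → T^[k] x ≠ x → delayMap T d h x ≠ delayMap T d h (T^[k] x) := by
    intro x k hk hne
    obtain ⟨m, hm1, hm2, hm⟩ := exists_mem_periodType T (L := 2 * d + k + 1) (by omega) x
    exact hGIs (k, m) h (mem_iInter.1 hh.2 _) (x, T^[k] x) ⟨⟨hm, rfl⟩, hk, hm1, hm2, hne⟩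
  have hinj : Injective (delayMap T d h) := by
    intro x y hxy
    by_contra hne
    by_cases hdisj : ∀ k ≤ 2 * d, T^[k] x ≠ y ∧ T^[k] y ≠ x
    · obtain ⟨m, hm1, hm2, hm⟩ := exists_mem_periodType T (L := L) (by omega) x
      obtain ⟨n, hn1, hn2, hn⟩ := exists_mem_periodType T (L := L) (by omega) y
      exact hGDs (m, n) h (mem_iInter.1 hh.1 _) (x, y)
        ⟨⟨hm, hn⟩, hm1, hn1, hm2, hn2, hdisj⟩ hxy
    · push Not at hdisj
      obtain ⟨k, hk, hk'⟩ := hdisj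
      by_cases hx : T^[k] x = y
      · subst hx
        exact hiter x k hk (Ne.symm hne) hxy
      · have hy := hk' hx
        subst hy
        exact hiter y k hk hne hxy.symm
  have hcont : Continuous (delayMap T d h) :=
    continuous_pi fun i => h.continuous.comp (hTc.iterate _)
  exact (hcont.isClosedEmbedding hinj).isEmbedding
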